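/- Pointwise injectivity of 𝓗_{4n−1} for the canonical form (Part 1 of the proof of Proposition 4). Let θ = (θ_a, θ_b) and θ* = (θ_a*, θ_b*) in R^n × R^n, x, x* ∈ R^n, and v = (v_0, …, v_{4n−2}) ∈ R^{4n−1}. Assume the 2n×2n Hankel matrix 𝔐_{2n−1}(v) is invertible and the 2n×2n Sylvester matrix M(θ_a, θ_b) is invertible. If 𝓗_{4n−1}(x, θ, v) = 𝓗_{4n−1}(x*, θ*, v), then θ = θ* and x = x*. -/

import Mathlib

open scoped Matrix BigOperators

/-- The first basis row vector `e₁ᵀ = (1, 0, …, 0)`. -/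
def e1 (n : ℕ) : Fin n → ℝ := fun j => if (j : ℕ) = 0 then 1 else 0

/-- Canonical SISO form : `A(θ_a)` has first column `−θ_a` and entries `(i, i+1)` equal
to `1`, all other entries `0`. -/
def Acan (n : ℕ) (θa : Fin n → ℝ) : Matrix (Fin n) (Fin n) ℝ :=
  fun i j => if (j : ℕ) = 0 then -θa i else if (j : ℕ) = (i : ℕ) + 1 then 1 else 0

/-- `H_r(θ)` : the `r × n` matrix stacking the rows `C A(θ_a)^{j-1}`, `j = 1,…,r`. -/
def Hcan (n r : ℕ) (θa : Fin n → ℝ) : Matrix (Fin r) (Fin n) ℝ :=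
  fun j => Matrix.vecMul (e1 n) (Acan n θa ^ (j : ℕ))

/-- The down-shift matrix `S ∈ ℝ^{r×r}`. -/
def shiftMat (r : ℕ) : Matrix (Fin r) (Fin r) ℝ :=
  fun i j => if (i : ℕ) = (j : ℕ) + 1 then 1 else 0

/-- `𝓗_r(x, θ, v) = H_r(θ) x + Σ_{j=1}^{r−1} S^j H_r(θ) B(θ_b) v_{j−1}` for the
canonical form. -/
def HHcan (n r : ℕ) (x θa θb : Fin n → ℝ) (v : Fin (r - 1) → ℝ) : Fin r → ℝ :=
  Hcan n r θa *ᵥ x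
    + ∑ j : Fin (r - 1), v j • ((shiftMat r ^ ((j : ℕ) + 1)) *ᵥ (Hcan n r θa *ᵥ θb))

/-- The `a × a` Hankel matrix of a vector `v ∈ ℝ^b` : entry `(i,j)` is `v_{i+j}`. -/
def hankelOf (a b : ℕ) (v : Fin b → ℝ) : Matrix (Fin a) (Fin a) ℝ :=
  fun i j => if h : (i : ℕ) + (j : ℕ) < b then v ⟨(i : ℕ) + (j : ℕ), h⟩ else 0

/-- The column `(θ_{bn}, θ_{b(n−1)}, …, θ_{b1}, 0, …, 0)ᵀ ∈ ℝ^{2n}`. -/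
def colB (n : ℕ) (θb : Fin n → ℝ) : Fin (2 * n) → ℝ :=
  fun i => if h : (i : ℕ) < n then θb ⟨n - 1 - (i : ℕ), by omega⟩ else 0

/-- The column `(θ_{an}, θ_{a(n−1)}, …, θ_{a1}, 1, 0, …, 0)ᵀ ∈ ℝ^{2n}`. -/
def colA (n : ℕ) (θa : Fin n → ℝ) : Fin (2 * n) → ℝ :=
  fun i => if h : (i : ℕ) < n then θa ⟨n - 1 - (i : ℕ), by omega⟩
    else if (i : ℕ) = n then 1 else 0

/-- The `2n × 2n` Sylvester (resultant) matrix : its first `n` columns are the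
successive downward shifts of `colB` and its last `n` columns are the successive
downward shifts of `colA`. -/
def sylvesterMat (n : ℕ) (θa θb : Fin n → ℝ) : Matrix (Fin (2 * n)) (Fin (2 * n)) ℝ :=
  fun i j =>
    if (j : ℕ) < n then
      (if h : (j : ℕ) ≤ (i : ℕ) then colB n θb ⟨(i : ℕ) - (j : ℕ), by have := i.2; omega⟩
        else 0)
    else
      (if h : (j : ℕ) - n ≤ (i : ℕ) then
        colA n θa ⟨(i : ℕ) - ((j : ℕ) - n), by have := i.2; omega⟩ else 0)

open Polynomial in
noncomputable def evS (u : ℕ → ℝ) : ℝ[X] →ₗ[ℝ] ℝ :=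
  Polynomial.lsum (fun k => u k • LinearMap.id)

open Polynomial in
noncomputable def polQ (n : ℕ) (b : ℕ → ℝ) : ℝ[X] :=
  ∑ i ∈ Finset.range n, monomial (n - 1 - i) (b i)

open Polynomial in
lemma evS_monomial (u : ℕ → ℝ) (k : ℕ) (c : ℝ) : evS u (monomial k c) = u k * c := by
  simp [evS, Polynomial.lsum_apply]

open Polynomial in
lemma evS_X_pow (u : ℕ → ℝ) (k : ℕ) : evS u (X ^ k) = u k := by
  rw [X_pow_eq_monomial, evS_monomial, mul_one]

open Polynomial in
lemma polQ_coeff (n : ℕ) (b : ℕ → ℝ) (i : ℕ) :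
    (polQ n b).coeff i = if i < n then b (n - 1 - i) else 0 := by
  unfold polQ
  rw [finsetSum_coeff]
  simp only [coeff_monomial]
  split_ifs with h
  · rw [Finset.sum_eq_single (n - 1 - i)]
    · rw [if_pos (by omega)]
    · intro j hj hne
      have := Finset.mem_range.1 hj
      rw [if_neg (by omega)]
    · intro hj
      exact absurd (Finset.mem_range.2 (by omega)) hj
  · apply Finset.sum_eq_zero
    intro j hj
    have := Finset.mem_range.1 hj
    rw [if_neg (by omega)]

open Polynomial in
lemma polQ_degree (n : ℕ) (b : ℕ → ℝ) : (polQ n b).degree < n := by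
  rw [degree_lt_iff_coeff_zero]
  intro m hm
  rw [polQ_coeff, if_neg (by omega)]

open Polynomial in
lemma evS_polQ (u : ℕ → ℝ) (n k : ℕ) (b : ℕ → ℝ) :
    evS u (X ^ k * polQ n b) = ∑ i ∈ Finset.range n, b i * u (k + n - 1 - i) := by
  unfold polQ
  rw [Finset.mul_sum, map_sum]
  apply Finset.sum_congr rfl
  intro i hi
  have := Finset.mem_range.1 hi
  rw [X_pow_eq_monomial, monomial_mul_monomial, evS_monomial, one_mul, mul_comm]
  congr 2
  omega

open Polynomial in
lemma evS_rel (u y : ℕ → ℝ) (N : ℕ) (P Q : ℝ[X])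
    (h : ∀ k < N, evS y (X ^ k * P) = evS u (X ^ k * Q)) (R : ℝ[X]) (hR : R.natDegree < N) :
    evS y (R * P) = evS u (R * Q) := by
  rw [R.as_sum_range_C_mul_X_pow' hR, Finset.sum_mul, Finset.sum_mul, map_sum, map_sum]
  apply Finset.sum_congr rfl
  intro i hi
  rw [mul_assoc, mul_assoc, ← smul_eq_C_mul, ← smul_eq_C_mul, map_smul, map_smul,
    h i (Finset.mem_range.1 hi)]

open Polynomial in
lemma poly_core (n : ℕ) (hn : 0 < n) (a b a' b' v y : ℕ → ℝ)
    (hH : ∀ w : ℕ → ℝ, (∀ k < 2 * n, ∑ i ∈ Finset.range (2 * n), v (k + i) * w i = 0) →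
      ∀ i < 2 * n, w i = 0)
    (h1 : ∀ k < 3 * n, evS y (X ^ k * (X ^ n + polQ n a)) = evS v (X ^ k * polQ n b))
    (h2 : ∀ k < 3 * n, evS y (X ^ k * (X ^ n + polQ n a')) = evS v (X ^ k * polQ n b')) :
    (X ^ n + polQ n a') * polQ n b = (X ^ n + polQ n a) * polQ n b' := by
  have hdP : ∀ a : ℕ → ℝ, (X ^ n + polQ n a).natDegree ≤ n := by
    intro a
    rw [natDegree_le_iff_coeff_eq_zero]
    intro m hm
    rw [coeff_add, coeff_X_pow, polQ_coeff, if_neg (by omega), if_neg (by omega), add_zero]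
  have hdQ : ∀ b : ℕ → ℝ, (polQ n b).natDegree ≤ n - 1 := by
    intro b
    rw [natDegree_le_iff_coeff_eq_zero]
    intro m hm
    rw [polQ_coeff, if_neg (by omega)]
  have hdX : ∀ (a : ℕ → ℝ) (k : ℕ), k < 2 * n → (X ^ k * (X ^ n + polQ n a)).natDegree < 3 * n := by
    intro a k hk
    have := natDegree_mul_le (p := (X : ℝ[X]) ^ k) (q := X ^ n + polQ n a)
    have h3 := hdP a
    rw [natDegree_X_pow] at this
    omega
  set D := (X ^ n + polQ n a') * polQ n b - (X ^ n + polQ n a) * polQ n b' with hD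
  have hDdeg : D.natDegree < 2 * n := by
    have e1 := natDegree_sub_le ((X ^ n + polQ n a') * polQ n b) ((X ^ n + polQ n a) * polQ n b')
    have e2 := natDegree_mul_le (p := X ^ n + polQ n a') (q := polQ n b)
    have e3 := natDegree_mul_le (p := X ^ n + polQ n a) (q := polQ n b')
    have := hdP a
    have := hdP a'
    have := hdQ b
    have := hdQ b'
    rw [← hD] at e1
    omega
  have hV : ∀ k < 2 * n, evS v (X ^ k * D) = 0 := by
    intro k hk
    have e1 := evS_rel v y (3 * n) _ _ h1 (X ^ k * (X ^ n + polQ n a')) (hdX a' k hk)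
    have e2 := evS_rel v y (3 * n) _ _ h2 (X ^ k * (X ^ n + polQ n a)) (hdX a k hk)
    rw [hD, mul_sub, map_sub, ← mul_assoc, ← mul_assoc, ← e1, ← e2, sub_eq_zero]
    congr 1
    ring
  have hc := hH D.coeff (by
    intro k hk
    rw [← hV k hk]
    conv_rhs => rw [D.as_sum_range' _ hDdeg]
    rw [Finset.mul_sum, map_sum]
    apply Finset.sum_congr rfl
    intro i hi
    rw [X_pow_eq_monomial, monomial_mul_monomial, evS_monomial, one_mul])
  rw [← sub_eq_zero, ← hD]
  ext i
  by_cases hi : i < 2 * n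
  · simpa using hc i hi
  · rw [coeff_eq_zero_of_natDegree_lt (by omega), coeff_zero]

open Polynomial in
lemma sylv_core (n : ℕ) (a b : ℕ → ℝ)
    (hS : ∀ w : ℕ → ℝ, (∀ i < 2 * n,
      ∑ j ∈ Finset.range n, (if j ≤ i then (polQ n b).coeff (i - j) else 0) * w j
      + ∑ j ∈ Finset.range n, (if j ≤ i then (X ^ n + polQ n a).coeff (i - j) else 0) * w (n + j)
        = 0) → ∀ i < 2 * n, w i = 0)
    (F G : ℝ[X]) (hF : ∀ i, n ≤ i → F.coeff i = 0) (hG : ∀ i, n ≤ i → G.coeff i = 0)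
    (h : polQ n b * F + (X ^ n + polQ n a) * G = 0) : F = 0 ∧ G = 0 := by
  have key : ∀ (Q F : ℝ[X]) (i : ℕ), (∀ i, n ≤ i → F.coeff i = 0) →
      (Q * F).coeff i =
      ∑ j ∈ Finset.range n, (if j ≤ i then Q.coeff (i - j) else 0) * F.coeff j := by
    intro Q F i hF
    have : F = ∑ j ∈ Finset.range n, C (F.coeff j) * X ^ j := by
      ext m
      simp only [finsetSum_coeff, coeff_C_mul, coeff_X_pow]
      by_cases hm : m < n
      · rw [Finset.sum_eq_single m]
        · simp
        · intro j _ hj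
          simp [hj.symm]
        · intro hj
          exact absurd (Finset.mem_range.2 hm) hj
      · rw [hF m (by omega)]
        symm
        apply Finset.sum_eq_zero
        intro j hj
        have := Finset.mem_range.1 hj
        rw [if_neg (by omega), mul_zero]
    conv_lhs => rw [this]
    rw [Finset.mul_sum, finsetSum_coeff]
    apply Finset.sum_congr rfl
    intro j _
    rw [mul_left_comm, coeff_C_mul, coeff_mul_X_pow', mul_comm]
  have hw := hS (fun j => if j < n then F.coeff j else G.coeff (j - n)) (by
    intro i hi
    have e := congrArg (fun p => Polynomial.coeff p i) h
    simp only [coeff_add, coeff_zero] at e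
    rw [key _ _ _ hF, key _ _ _ hG] at e
    refine Eq.trans ?_ e
    congr 1
    · apply Finset.sum_congr rfl
      intro j hj
      rw [if_pos (Finset.mem_range.1 hj)]
    · apply Finset.sum_congr rfl
      intro j hj
      rw [if_neg (by omega : ¬ (n + j < n)), Nat.add_sub_cancel_left])
  constructor
  · ext i
    by_cases hi : i < n
    · have := hw i (by omega)
      simpa [hi] using this
    · simpa using hF i (by omega)
  · ext i
    by_cases hi : i < n
    · have := hw (n + i) (by omega)
      simpa using this
    · simpa using hG i (by omega)

def ext0 {m : ℕ} (f : Fin m → ℝ) (i : ℕ) : ℝ := if h : i < m then f ⟨i, h⟩ else 0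

lemma ext0_fin {m : ℕ} (f : Fin m → ℝ) (i : Fin m) : ext0 f i = f i := by
  simp [ext0]

noncomputable def stt (n : ℕ) (x θa θb : Fin n → ℝ) (v : ℕ → ℝ) : ℕ → Fin n → ℝ
  | 0 => x
  | k + 1 => Acan n θa *ᵥ stt n x θa θb v k + v k • θb

lemma stt_closed (n : ℕ) (x θa θb : Fin n → ℝ) (v : ℕ → ℝ) (k : ℕ) :
    stt n x θa θb v k = (Acan n θa ^ k) *ᵥ x
      + ∑ j ∈ Finset.range k, v j • ((Acan n θa ^ (k - 1 - j)) *ᵥ θb) := by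
  induction k with
  | zero => simp [stt]
  | succ k ih =>
    rw [stt, ih, Matrix.mulVec_add, Matrix.mulVec_mulVec, ← pow_succ', Finset.sum_range_succ,
      Matrix.mulVec_sum, add_assoc]
    congr 2
    · apply Finset.sum_congr rfl
      intro j hj
      have := Finset.mem_range.1 hj
      rw [Matrix.mulVec_smul, Matrix.mulVec_mulVec, ← pow_succ']
      congr 3
      omega
    · simp

lemma stt_step (n : ℕ) (x θa θb : Fin n → ℝ) (v : ℕ → ℝ) (k i : ℕ) (hi : i < n) :
    ext0 (stt n x θa θb v (k + 1)) i = - ext0 θa i * ext0 (stt n x θa θb v k) 0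
      + ext0 (stt n x θa θb v k) (i + 1) + ext0 θb i * v k := by
  have hA : (Acan n θa *ᵥ stt n x θa θb v k) ⟨i, hi⟩ =
      - ext0 θa i * ext0 (stt n x θa θb v k) 0 + ext0 (stt n x θa θb v k) (i + 1) := by
    set s := stt n x θa θb v k
    have e : ∀ j : Fin n, Acan n θa ⟨i, hi⟩ j * s j =
        (fun j : ℕ => (if j = 0 then - ext0 θa i * ext0 s 0 else 0) +
          (if j = i + 1 then ext0 s (i + 1) else 0)) (j : ℕ) := by
      intro j
      have hs := ext0_fin s j
      have ha := ext0_fin θa ⟨i, hi⟩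
      simp only at ha
      simp only [Acan]
      by_cases h0 : (j : ℕ) = 0
      · rw [h0] at hs
        simp [h0, ← hs, ← ha]
      · by_cases h1 : (j : ℕ) = i + 1
        · rw [h1] at hs
          simp [h1, ← hs]
        · simp [h0, h1]
    rw [Matrix.mulVec, dotProduct, Finset.sum_congr rfl (fun j _ => e j),
      Fin.sum_univ_eq_sum_range (fun j : ℕ => (if j = 0 then - ext0 θa i * ext0 s 0 else 0) +
          (if j = i + 1 then ext0 s (i + 1) else 0)) n, Finset.sum_add_distrib,
      Finset.sum_ite_eq', Finset.sum_ite_eq', if_pos (Finset.mem_range.2 (by omega))]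
    congr 1
    by_cases h : i + 1 < n
    · simp [h]
    · simp [h, ext0]
  rw [← hA]
  simp only [ext0, hi, dif_pos, stt, Pi.add_apply, Pi.smul_apply, smul_eq_mul]
  ring

lemma stt_obs (n : ℕ) (x θa θb : Fin n → ℝ) (v : ℕ → ℝ) (m : ℕ) (hm : m ≤ n) (k : ℕ) :
    ext0 (stt n x θa θb v k) m = ext0 (stt n x θa θb v (k + m)) 0
      + ∑ i ∈ Finset.range m, ext0 θa i * ext0 (stt n x θa θb v (k + m - 1 - i)) 0
      - ∑ i ∈ Finset.range m, ext0 θb i * v (k + m - 1 - i) := by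
  induction m generalizing k with
  | zero => simp
  | succ m ih =>
    have h1 := stt_step n x θa θb v k m (by omega)
    have h2 := ih (by omega) (k + 1)
    rw [Finset.sum_range_succ, Finset.sum_range_succ]
    have e1 : k + (m + 1) - 1 - m = k := by omega
    have e2 : k + 1 + m = k + (m + 1) := by omega
    rw [e2] at h2
    rw [e1]
    linarith

lemma shift_pow (r m : ℕ) (h : Fin r → ℝ) (k : Fin r) :
    ((shiftMat r ^ m) *ᵥ h) k = if m ≤ (k : ℕ) then ext0 h (k - m) else 0 := by
  induction m generalizing k with
  | zero => simp [ext0]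
  | succ m ih =>
    rw [pow_succ', ← Matrix.mulVec_mulVec]
    set g := (shiftMat r ^ m) *ᵥ h
    rw [Matrix.mulVec, dotProduct]
    have hk := k.2
    by_cases h0 : (k : ℕ) = 0
    · rw [if_neg (by omega)]
      apply Finset.sum_eq_zero
      intro j _
      simp [shiftMat, h0]
    · rw [Finset.sum_eq_single (⟨k - 1, by omega⟩ : Fin r)]
      · rw [ih]
        have : (k : ℕ) = k - 1 + 1 := by omega
        simp only [shiftMat]
        rw [if_pos this, one_mul]
        have e : (k : ℕ) - 1 - m = k - (m + 1) := by omega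
        rw [e]
        by_cases hh : m + 1 ≤ (k : ℕ)
        · rw [if_pos hh, if_pos (by omega)]
        · rw [if_neg hh, if_neg (by omega)]
      · intro j _ hj
        have : ¬ ((k : ℕ) = j + 1) := by
          intro hh
          apply hj
          ext
          simp only
          omega
        simp [shiftMat, this]
      · intro hh
        exact absurd (Finset.mem_univ _) hh

lemma Hcan_apply (n r : ℕ) (hn : 0 < n) (θa x : Fin n → ℝ) (k : Fin r) :
    (Hcan n r θa *ᵥ x) k = ext0 ((Acan n θa ^ (k : ℕ)) *ᵥ x) 0 := by
  have : (Hcan n r θa *ᵥ x) k = e1 n ⬝ᵥ ((Acan n θa ^ (k : ℕ)) *ᵥ x) := by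
    rw [Matrix.dotProduct_mulVec]
    rfl
  rw [this, dotProduct, Finset.sum_eq_single (⟨0, hn⟩ : Fin n)]
  · simp [e1, ext0, hn]
  · intro j _ hj
    have : ¬ ((j : ℕ) = 0) := by
      intro hh
      apply hj
      ext
      exact hh
    simp [e1, this]
  · intro hh
    exact absurd (Finset.mem_univ _) hh

lemma HHcan_eq (n r : ℕ) (hn : 0 < n) (x θa θb : Fin n → ℝ) (v : Fin (r - 1) → ℝ) (k : Fin r) :
    HHcan n r x θa θb v k = ext0 (stt n x θa θb (ext0 v) k) 0 := by
  have hk := k.2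
  rw [stt_closed]
  simp only [HHcan, Pi.add_apply, Finset.sum_apply, Pi.smul_apply, smul_eq_mul, shift_pow]
  rw [Hcan_apply n r hn]
  simp only [ext0, hn, dif_pos, Pi.add_apply, Finset.sum_apply, Pi.smul_apply, smul_eq_mul]
  congr 1
  have e : ∀ j : Fin (r - 1), (v j * if (j : ℕ) + 1 ≤ k then
      (if h : (k : ℕ) - (j + 1) < r then (Hcan n r θa *ᵥ θb) ⟨k - (j + 1), h⟩ else 0) else 0)
      = (fun j : ℕ => if j < k then ext0 v j * (((Acan n θa ^ ((k : ℕ) - 1 - j)) *ᵥ θb) ⟨0, hn⟩)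
          else 0) (j : ℕ) := by
    intro j
    simp only [ext0_fin]
    by_cases h : (j : ℕ) < k
    · rw [if_pos h, if_pos (by omega), dif_pos (by omega), Hcan_apply n r hn]
      simp only [ext0, hn, dif_pos]
      have : (k : ℕ) - (j + 1) = k - 1 - j := by omega
      rw [this]
    · rw [if_neg h, if_neg (by omega), mul_zero]
  rw [Finset.sum_congr rfl (fun j _ => e j), Fin.sum_univ_eq_sum_range
    (fun j : ℕ => if j < k then ext0 v j * (((Acan n θa ^ ((k : ℕ) - 1 - j)) *ᵥ θb) ⟨0, hn⟩)
          else 0), ← Finset.sum_filter]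
  have : (Finset.range (r - 1)).filter (fun j => j < (k : ℕ)) = Finset.range k := by
    ext j
    simp only [Finset.mem_filter, Finset.mem_range]
    omega
  rw [this]
  rfl

lemma mulVec_zero_of_unit (m : ℕ) (M : Matrix (Fin m) (Fin m) ℝ) (hM : IsUnit M.det)
    (w : ℕ → ℝ) (h : ∀ i : Fin m, ∑ j : Fin m, M i j * w j = 0) : ∀ i < m, w i = 0 := by
  have := Matrix.eq_zero_of_mulVec_eq_zero (M := M) (v := fun j : Fin m => w j) hM.ne_zero
    (by ext i; exact h i)
  intro i hi
  exact congrFun this ⟨i, hi⟩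

/-- pointwise injectivity of `𝓗` for the canonical form ;
Part 1 of the proof of Proposition 4. -/
theorem pointwise_injectivity_canonical
    (n : ℕ) (hn : 0 < n)
    (θa θb θa' θb' : Fin n → ℝ) (x x' : Fin n → ℝ)
    (v : Fin (4 * n - 1) → ℝ)
    (hHankel : IsUnit (hankelOf (2 * n) (4 * n - 1) v).det)
    (hSylv : IsUnit (sylvesterMat n θa θb).det)
    (heq : HHcan n (4 * n) x θa θb v = HHcan n (4 * n) x' θa' θb' v) :
    θa = θa' ∧ θb = θb' ∧ x = x' := by
  classical
  have hH : ∀ w : ℕ → ℝ,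
      (∀ k < 2 * n, ∑ i ∈ Finset.range (2 * n), ext0 v (k + i) * w i = 0) →
      ∀ i < 2 * n, w i = 0 := by
    intro w hw
    apply mulVec_zero_of_unit _ _ hHankel
    intro i
    rw [← hw i i.2, ← Fin.sum_univ_eq_sum_range (fun j => ext0 v (i + j) * w j)]
    rfl
  have hB : ∀ i : Fin (2 * n), colB n θb i = (polQ n (ext0 θb)).coeff i := by
    intro i
    rw [polQ_coeff]
    unfold colB ext0
    split_ifs <;> first | rfl | omega
  have hA : ∀ i : Fin (2 * n), colA n θa i =
      (Polynomial.X ^ n + polQ n (ext0 θa)).coeff i := by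
    intro i
    rw [Polynomial.coeff_add, polQ_coeff, Polynomial.coeff_X_pow]
    unfold colA ext0
    split_ifs <;> first | omega | simp
  have hS := sylv_core n (ext0 θa) (ext0 θb) (by
    intro w hw
    apply mulVec_zero_of_unit _ _ hSylv
    intro i
    rw [← hw i i.2]
    have e : ∀ j : Fin (2 * n), sylvesterMat n θa θb i j * w j = (fun j : ℕ =>
        (if j < n then (if j ≤ i then (polQ n (ext0 θb)).coeff (i - j) else 0) else
          (if j - n ≤ i then (Polynomial.X ^ n + polQ n (ext0 θa)).coeff (i - (j - n)) else 0))
          * w j) (j : ℕ) := by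
      intro j
      simp only [sylvesterMat, hA, hB, dite_eq_ite]
    rw [Finset.sum_congr rfl (fun j _ => e j)]
    clear e
    refine (Fin.sum_univ_eq_sum_range (fun j : ℕ =>
        (if j < n then (if j ≤ (i : ℕ) then (polQ n (ext0 θb)).coeff ((i : ℕ) - j) else 0) else
          (if j - n ≤ (i : ℕ) then
            (Polynomial.X ^ n + polQ n (ext0 θa) : Polynomial ℝ).coeff ((i : ℕ) - (j - n)) else 0))
          * w j) (2 * n)).trans ?_
    generalize (i : ℕ) = i0
    rw [two_mul, Finset.sum_range_add]
    congr 1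
    · apply Finset.sum_congr rfl
      intro j hj
      rw [if_pos (Finset.mem_range.1 hj)]
    · apply Finset.sum_congr rfl
      intro j hj
      rw [if_neg (by omega : ¬ (n + j < n)), Nat.add_sub_cancel_left])
  set y : ℕ → ℝ := fun k => ext0 (stt n x θa θb (ext0 v) k) 0 with hy
  have hyy : ∀ k < 4 * n, ext0 (stt n x' θa' θb' (ext0 v) k) 0 = y k := by
    intro k hk
    have := congrFun heq ⟨k, hk⟩
    rw [HHcan_eq _ _ hn, HHcan_eq _ _ hn] at this
    exact this.symm
  have ext_ge : ∀ f : Fin n → ℝ, ext0 f n = 0 := by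
    intro f
    simp [ext0]
  have h1 : ∀ k < 3 * n, evS y (Polynomial.X ^ k * (Polynomial.X ^ n + polQ n (ext0 θa))) =
      evS (ext0 v) (Polynomial.X ^ k * polQ n (ext0 θb)) := by
    intro k hk
    rw [mul_add, map_add, ← pow_add, evS_X_pow, evS_polQ, evS_polQ]
    have := stt_obs n x θa θb (ext0 v) n le_rfl k
    rw [ext_ge] at this
    simp only [hy]
    linarith
  have h2 : ∀ k < 3 * n, evS y (Polynomial.X ^ k * (Polynomial.X ^ n + polQ n (ext0 θa'))) =
      evS (ext0 v) (Polynomial.X ^ k * polQ n (ext0 θb')) := by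
    intro k hk
    rw [mul_add, map_add, ← pow_add, evS_X_pow, evS_polQ, evS_polQ]
    have := stt_obs n x' θa' θb' (ext0 v) n le_rfl k
    rw [ext_ge, hyy _ (by omega), Finset.sum_congr rfl (fun i hi => by
      rw [hyy (k + n - 1 - i) (by omega)])] at this
    linarith
  have hpoly := poly_core n hn _ _ _ _ _ y hH h1 h2
  obtain ⟨hF, hG⟩ := hS (polQ n (ext0 θa') - polQ n (ext0 θa))
    (polQ n (ext0 θb) - polQ n (ext0 θb'))
    (by
      intro i hi
      rw [Polynomial.coeff_sub, polQ_coeff, polQ_coeff, if_neg (by omega), if_neg (by omega),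
        sub_zero])
    (by
      intro i hi
      rw [Polynomial.coeff_sub, polQ_coeff, polQ_coeff, if_neg (by omega), if_neg (by omega),
        sub_zero])
    (by linear_combination hpoly)
  have inj : ∀ f g : Fin n → ℝ, polQ n (ext0 f) - polQ n (ext0 g) = 0 → f = g := by
    intro f g h
    ext i
    have e := congrArg (fun p => Polynomial.coeff p (n - 1 - i)) (sub_eq_zero.1 h)
    have hi := i.2
    simp only [polQ_coeff] at e
    rw [if_pos (by omega), if_pos (by omega)] at e
    have e3 : n - 1 - (n - 1 - (i : ℕ)) = i := by omega
    rwa [e3, ext0_fin, ext0_fin] at e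
  have ea : θa = θa' := (inj _ _ hF).symm
  have eb : θb = θb' := inj _ _ hG
  refine ⟨ea, eb, ?_⟩
  subst ea eb
  ext m
  have hm := m.2
  have o1 := stt_obs n x θa θb (ext0 v) m hm.le 0
  have o2 := stt_obs n x' θa θb (ext0 v) m hm.le 0
  rw [hyy _ (by omega), Finset.sum_congr rfl (fun i hi => by
      rw [hyy (0 + m - 1 - i) (by omega)])] at o2
  have o3 := o1.trans o2.symm
  simpa only [stt, ext0_fin] using o3
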